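/- arXiv:1904.03088 — 2 statements merged into one kernel-verified Lean document; each statement's English description precedes it below -/
import Mathlib

section
/- Let Ω ⊆ ℝ^d be open and let f ∈ L¹_loc(Ω, ℝ) satisfy ∫_Ω f Δφ = 0 for every φ ∈ C_c^∞(Ω, ℝ). Let r > 0 and let ρ_r ∈ C_c^∞(ℝ^d, ℝ) be a radial mollifier with supp ρ_r ⊆ B(0,r), ρ_r ≥ 0 and ∫ ρ_r = 1. Then (ρ_r ∗ f)(ξ) = f(ξ) for almost every ξ ∈ Ω_r := {ξ ∈ Ω : dist(ξ, ∂Ω) > r}. -/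
open MeasureTheory

/-- The `i`-th standard basis vector of `ℝ^d`. -/
noncomputable def stdBasis {d : ℕ} (i : Fin d) : EuclideanSpace ℝ (Fin d) :=
  EuclideanSpace.single i (1 : ℝ)

/-- The Laplacian `Δu(x) = Σᵢ DᵢDᵢ u (x)` of a function `u : ℝ^d → ℝ`. -/
noncomputable def lap {d : ℕ} (u : EuclideanSpace ℝ (Fin d) → ℝ)
    (x : EuclideanSpace ℝ (Fin d)) : ℝ :=
  ∑ i : Fin d, fderiv ℝ (fun y => fderiv ℝ u y (stdBasis i)) x (stdBasis i)

/-!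
Let `φ` be a test function supported near a point of `Ω_r`. The function `u y = ∫ φ (x - y) f x dx`
is smooth, and it is harmonic on `B(0, r)`, because there the translates of `φ` are admissible test
functions. By associativity of convolution and radiality of `ρ`, `∫ φ (ρ ⋆ f) = ∫ ρ u`, whereas
`∫ φ f = u 0`, so everything reduces to the mean value property `∫ ρ u = (∫ ρ) u 0`. For radial `ρ`
the field `-ρ(y) y` is the gradient of a function `P` supported in `B(0, r)`, and Green's identity
turns `d/dt ∫ ρ(y) u(t y) dy` into a multiple of `∫ P(y) (Δu)(t y) dy = 0`.
-/

open Set Metric Function Topology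
open ContinuousLinearMap (lsmul)
open scoped Laplacian Convolution ContDiff

lemma hasCompactSupport_of_support_subset_ball {X F : Type*} [PseudoMetricSpace X] [ProperSpace X]
    [Zero F] {f : X → F} {x : X} {r : ℝ} (hf : support f ⊆ ball x r) : HasCompactSupport f :=
  .of_support_subset_isCompact (isCompact_closedBall x r) (hf.trans ball_subset_closedBall)

lemma ae_restrict_of_forall_exists_mem_nhdsWithin {X : Type*} [TopologicalSpace X]
    [SecondCountableTopology X] [MeasurableSpace X] {μ : Measure X} {s : Set X} {p : X → Prop}
    (h : ∀ x ∈ s, ∃ t ∈ 𝓝[s] x, ∀ᵐ y ∂μ.restrict t, p y) : ∀ᵐ y ∂μ.restrict s, p y := by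
  choose! t ht htp using h
  obtain ⟨c, hcs, hc, hsc⟩ := TopologicalSpace.countable_cover_nhdsWithin ht
  exact ae_restrict_of_ae_restrict_of_subset hsc
    ((ae_restrict_biUnion_iff t hc p).2 fun x hx => htp x (hcs hx))

lemma exists_closedBall_add_subset {X : Type*} [NormedAddCommGroup X] [NormedSpace ℝ X]
    [ProperSpace X] {Ω : Set X} (hΩ : IsOpen Ω) {x : X} {r : ℝ} (hr : 0 ≤ r)
    (hx : closedBall x r ⊆ Ω) : ∃ δ > 0, closedBall x (r + δ) ⊆ Ω := by
  obtain ⟨δ, hδ, hsub⟩ := (isCompact_closedBall x r).exists_cthickening_subset_open hΩ hx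
  rw [cthickening_closedBall hδ.le hr, add_comm] at hsub
  exact ⟨δ, hδ, hsub⟩

lemma convolution_congr_ball {X F : Type*} [NormedAddCommGroup X] [MeasurableSpace X]
    [NormedAddCommGroup F] [NormedSpace ℝ F] {μ : Measure X} {ρ : X → ℝ} {f g : X → F} {x : X}
    {r : ℝ} (hsupp : support ρ ⊆ ball 0 r) (hfg : EqOn f g (ball x r)) :
    (ρ ⋆[lsmul ℝ ℝ, μ] f) x = (ρ ⋆[lsmul ℝ ℝ, μ] g) x := by
  refine integral_congr_ae (.of_forall fun y => ?_)
  by_cases hy : y ∈ ball 0 r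
  · simp [hfg (by simpa using hy : x - y ∈ ball x r)]
  · simp [notMem_support.1 fun h => hy (hsupp h)]

section

variable {E F G H : Type*} [NormedAddCommGroup E] [InnerProductSpace ℝ E]
  [NormedAddCommGroup F] [NormedSpace ℝ F] [NormedAddCommGroup G] [NormedSpace ℝ G]
  [NormedAddCommGroup H] [NormedSpace ℝ H]

section Laplacian

variable [FiniteDimensional ℝ E]

lemma laplacian_eq_sum_fderiv_fderiv {ι : Type*} [Fintype ι] (b : OrthonormalBasis ι ℝ E)
    {u : E → F} (hu : ContDiff ℝ 2 u) (x : E) :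
    Δ u x = ∑ i, fderiv ℝ (fun y => fderiv ℝ u y (b i)) x (b i) := by
  have hdu : DifferentiableAt ℝ (fderiv ℝ u) x :=
    (hu.fderiv_right (m := 1) le_rfl).differentiable one_ne_zero x
  simp [InnerProductSpace.laplacian_eq_iteratedFDeriv_orthonormalBasis u b,
    iteratedFDeriv_two_apply, fderiv_clm_apply hdu]

lemma laplacian_comp_smul {u : E → F} (hu : ContDiff ℝ 2 u) (c : ℝ) (x : E) :
    Δ (fun y => u (c • y)) x = c ^ 2 • Δ u (c • x) := by
  simp [InnerProductSpace.laplacian_eq_iteratedFDeriv_stdOrthonormalBasis,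
    iteratedFDeriv_comp_const_smul c hu, Finset.smul_sum]

lemma laplacian_comp_const_sub {u : E → F} (hu : ContDiff ℝ 2 u) (a x : E) :
    Δ (fun y => u (a - y)) x = Δ u (a - x) := by
  have hneg : (fun y => u (a - y)) = fun y => (fun z => u (a + z)) ((-1 : ℝ) • y) := by
    simp [sub_eq_add_neg]
  rw [hneg, laplacian_comp_smul (u := fun z => u (a + z)) (by fun_prop)]
  simp [InnerProductSpace.laplacian_eq_iteratedFDeriv_stdOrthonormalBasis,
    iteratedFDeriv_comp_add_left, sub_eq_add_neg]

lemma support_laplacian_subset (u : E → F) : support (Δ u) ⊆ tsupport u := by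
  intro x hx
  by_contra hxu
  refine hx ?_
  simp [InnerProductSpace.laplacian_eq_iteratedFDeriv_stdOrthonormalBasis,
    notMem_support.1 fun h => hxu (support_iteratedFDeriv_subset 2 h)]

variable [MeasurableSpace E] [BorelSpace E] {μ : Measure E} [μ.IsAddHaarMeasure]

lemma fderiv_convolution_right_apply (L : F →L[ℝ] G →L[ℝ] H) {f : E → F} {g : E → G}
    (hf : LocallyIntegrable f μ) (hg : ContDiff ℝ 1 g) (hgc : HasCompactSupport g) (x v : E) :
    fderiv ℝ (f ⋆[L, μ] g) x v = (f ⋆[L, μ] fun y => fderiv ℝ g y v) x := by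
  rw [(hgc.hasFDerivAt_convolution_right L hf hg x).fderiv,
    convolution_precompR_apply L hf (hgc.fderiv ℝ) (hg.continuous_fderiv one_ne_zero)]

lemma laplacian_convolution_right (L : F →L[ℝ] G →L[ℝ] H) {f : E → F} {g : E → G}
    (hf : LocallyIntegrable f μ) (hg : ContDiff ℝ 2 g) (hgc : HasCompactSupport g) (x : E) :
    Δ (f ⋆[L, μ] g) x = (f ⋆[L, μ] Δ g) x := by
  let b := stdOrthonormalBasis ℝ E
  have hg' (i) : ContDiff ℝ 1 fun y => fderiv ℝ g y (b i) :=
    (hg.fderiv_right (m := 1) le_rfl).clm_apply contDiff_const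
  have hgc' (i) : HasCompactSupport fun y => fderiv ℝ g y (b i) := hgc.fderiv_apply ℝ (b i)
  have hint (i) : ConvolutionExistsAt f
      (fun y => fderiv ℝ (fun z => fderiv ℝ g z (b i)) y (b i)) x L μ :=
    ((hgc' i).fderiv_apply ℝ (b i)).convolutionExists_right L hf
      (((hg' i).continuous_fderiv one_ne_zero).clm_apply continuous_const) x
  calc Δ (f ⋆[L, μ] g) x
      = ∑ i, (f ⋆[L, μ] fun y => fderiv ℝ (fun z => fderiv ℝ g z (b i)) y (b i)) x := by
        rw [laplacian_eq_sum_fderiv_fderiv b (hgc.contDiff_convolution_right (n := 2) L hf hg)]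
        simp_rw [fderiv_convolution_right_apply L hf (hg.of_le one_le_two) hgc,
          fderiv_convolution_right_apply L hf (hg' _) (hgc' _)]
    _ = (f ⋆[L, μ] Δ g) x := by
        simp_rw [convolution_def, laplacian_eq_sum_fderiv_fderiv b hg, map_sum]
        exact (integral_finsetSum _ fun i _ => hint i).symm

lemma integral_smul_laplacian_eq_neg_integral_fderiv {P : E → ℝ} {w : E → E} {v : E → F}
    (hP : ∀ x, HasFDerivAt P (innerSL ℝ (w x)) x) (hPc : HasCompactSupport P) (hw : Continuous w)
    (hv : ContDiff ℝ 2 v) :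
    ∫ x, P x • Δ v x ∂μ = -∫ x, fderiv ℝ v x (w x) ∂μ := by
  let b := stdOrthonormalBasis ℝ E
  have hPd : Differentiable ℝ P := fun x => (hP x).differentiableAt
  have hPcont : Continuous P := hPd.continuous
  have hP' : fderiv ℝ P = fun x => innerSL ℝ (w x) := funext fun x => (hP x).fderiv
  have hv' (i) : ContDiff ℝ 1 fun x => fderiv ℝ v x (b i) :=
    (hv.fderiv_right (m := 1) le_rfl).clm_apply contDiff_const
  have hv'cont (i) : Continuous fun x => fderiv ℝ v x (b i) := (hv' i).continuous
  have hv''cont (i) : Continuous fun x => fderiv ℝ (fun y => fderiv ℝ v y (b i)) x (b i) :=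
    ((hv' i).continuous_fderiv one_ne_zero).clm_apply continuous_const
  have hint_right (i) :
      Integrable (fun x => P x • fderiv ℝ (fun y => fderiv ℝ v y (b i)) x (b i)) μ :=
    (hPcont.smul (hv''cont i)).integrable_of_hasCompactSupport hPc.smul_right
  have hint_left (i) : Integrable (fun x => fderiv ℝ P x (b i) • fderiv ℝ v x (b i)) μ := by
    refine Continuous.integrable_of_hasCompactSupport ?_ (hPc.fderiv_apply ℝ (b i)).smul_right
    rw [hP']
    fun_prop
  have hparts (i) : ∫ x, P x • fderiv ℝ (fun y => fderiv ℝ v y (b i)) x (b i) ∂μ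
      = -∫ x, fderiv ℝ P x (b i) • fderiv ℝ v x (b i) ∂μ :=
    integral_smul_fderiv_eq_neg_fderiv_smul_of_integrable (hint_left i) (hint_right i)
      ((hPcont.smul (hv'cont i)).integrable_of_hasCompactSupport hPc.smul_right)
      (fun x _ => hPd x) fun x _ => (hv' i).differentiable one_ne_zero x
  have hexpand (x : E) : ∑ i, fderiv ℝ P x (b i) • fderiv ℝ v x (b i) = fderiv ℝ v x (w x) := by
    conv_rhs => rw [← b.sum_repr' (w x), map_sum]
    simp [hP', real_inner_comm]
  simp_rw [laplacian_eq_sum_fderiv_fderiv b hv, Finset.smul_sum, ← hexpand]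
  rw [integral_finsetSum _ fun i _ => hint_right i, integral_finsetSum _ fun i _ => hint_left i,
    ← Finset.sum_neg_distrib]
  exact Finset.sum_congr rfl fun i _ => hparts i

end Laplacian

section Radial

lemma exists_radial_potential {r : ℝ} (hr : 0 ≤ r) {ρ : E → ℝ} (hρ : Continuous ρ)
    (hsupp : support ρ ⊆ ball 0 r) (hrad : ρ.FactorsThrough norm) :
    ∃ P : E → ℝ, (∀ x, HasFDerivAt P (innerSL ℝ (-(ρ x • x))) x) ∧ support P ⊆ ball 0 r := by
  rcases subsingleton_or_nontrivial E with _ | _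
  · exact ⟨0, fun x => (hasFDerivAt_const 0 x).congr_fderiv (Subsingleton.elim _ _), by simp⟩
  obtain ⟨e, he⟩ := exists_norm_eq E zero_le_one
  let h : ℝ → ℝ := fun s => ρ (√s • e)
  have hh : Continuous h := by fun_prop
  have h_norm_sq (x : E) : h (‖x‖ ^ 2) = ρ x := hrad (by simp [norm_smul, he])
  have h_eq_zero {s : ℝ} (hs : r ^ 2 ≤ s) : h s = 0 := by
    refine notMem_support.1 fun hmem => (Real.le_sqrt_of_sq_le hs).not_gt ?_
    simpa [norm_smul, he, abs_of_nonneg (Real.sqrt_nonneg s)] using hsupp hmem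
  -- Integrating in the variable `‖x‖ ^ 2` rather than `‖x‖` keeps `P` differentiable at the origin.
  refine ⟨fun x => -(1 / 2) * ∫ s in r ^ 2..‖x‖ ^ 2, h s, fun x => ?_, fun x hx => ?_⟩
  · have hint : HasDerivAt (fun t => ∫ s in r ^ 2..t, h s) (h (‖x‖ ^ 2)) (‖x‖ ^ 2) :=
      hh.integral_hasStrictDerivAt _ _ |>.hasDerivAt
    refine ((hint.comp_hasFDerivAt x (hasStrictFDerivAt_norm_sq x).hasFDerivAt).const_mul
      (-(1 / 2))).congr_fderiv ?_
    ext z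
    simp [h_norm_sq]
    ring
  · by_contra hxr
    have hle : r ^ 2 ≤ ‖x‖ ^ 2 := by
      gcongr
      simpa using hxr
    refine hx ?_
    have hzero : ∫ s in r ^ 2..‖x‖ ^ 2, h s = 0 :=
      intervalIntegral.integral_zero_ae <| .of_forall fun s hs =>
        h_eq_zero (by rw [uIoc_of_le hle] at hs; exact hs.1.le)
    simp [hzero]

variable [FiniteDimensional ℝ E] [MeasurableSpace E] [BorelSpace E] {μ : Measure E}

lemma hasDerivAt_integral_smul_comp_smul [IsFiniteMeasureOnCompacts μ] {ρ : E → ℝ}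
    (hρ : Continuous ρ) (hρc : HasCompactSupport ρ) {u : E → F} (hu : ContDiff ℝ 1 u) (t : ℝ) :
    HasDerivAt (fun s : ℝ => ∫ y, ρ y • u (s • y) ∂μ)
      (∫ y, ρ y • fderiv ℝ u (t • y) y ∂μ) t := by
  have hjoint : Continuous fun p : ℝ × E => ρ p.2 • fderiv ℝ u (p.1 • p.2) p.2 := by fun_prop
  obtain ⟨C, hC⟩ := (isCompact_Icc (a := t - 1) (b := t + 1)).prod hρc.isCompact
    |>.exists_bound_of_continuousOn hjoint.continuousOn
  refine (hasDerivAt_integral_of_dominated_loc_of_deriv_le (s := Icc (t - 1) (t + 1))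
    (F := fun s y => ρ y • u (s • y)) (F' := fun s y => ρ y • fderiv ℝ u (s • y) y)
    (bound := (tsupport ρ).indicator fun _ => C) (Icc_mem_nhds (by linarith) (by linarith))
    (.of_forall fun s => Continuous.aestronglyMeasurable (by fun_prop))
    (Continuous.integrable_of_hasCompactSupport (by fun_prop) hρc.smul_right)
    (Continuous.aestronglyMeasurable (by fun_prop)) (.of_forall fun y s hs => ?_) ?_
    (.of_forall fun y s _ => ?_)).2
  · by_cases hy : y ∈ tsupport ρ
    · simpa only [indicator_of_mem hy] using hC (s, y) ⟨hs, hy⟩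
    · simp [image_eq_zero_of_notMem_tsupport hy, hy]
  · exact (integrable_indicator_iff hρc.isCompact.measurableSet).2
      (integrableOn_const hρc.isCompact.measure_lt_top.ne)
  · have hu_at : HasFDerivAt u (fderiv ℝ u (s • y)) (s • y) :=
      (hu.differentiable one_ne_zero _).hasFDerivAt
    have hsmul : HasDerivAt (fun s : ℝ => s • y) y s := by
      simpa using (hasDerivAt_id s).smul_const y
    exact (hu_at.comp_hasDerivAt s hsmul).const_smul (ρ y)

variable [μ.IsAddHaarMeasure]

lemma integral_smul_fderiv_smul_eq_zero {r : ℝ} (hr : 0 ≤ r) {ρ : E → ℝ} (hρ : Continuous ρ)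
    (hsupp : support ρ ⊆ ball 0 r) (hrad : ρ.FactorsThrough norm) {u : E → F}
    (hu : ContDiff ℝ 2 u) (hharm : EqOn (Δ u) 0 (ball 0 r)) {t : ℝ} (ht : t ∈ Ioo 0 1) :
    ∫ y, ρ y • fderiv ℝ u (t • y) y ∂μ = 0 := by
  obtain ⟨P, hP, hPsupp⟩ := exists_radial_potential hr hρ hsupp hrad
  have hPc : HasCompactSupport P := hasCompactSupport_of_support_subset_ball hPsupp
  have hgreen := integral_smul_laplacian_eq_neg_integral_fderiv (μ := μ) (v := fun y => u (t • y))
    hP hPc (by fun_prop) (by fun_prop)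
  have hleft (y : E) : P y • Δ (fun z => u (t • z)) y = 0 := by
    by_cases hy : y ∈ ball 0 r
    · have hty : t • y ∈ ball 0 r := by
        rw [mem_ball_zero_iff, norm_smul, Real.norm_of_nonneg ht.1.le]
        exact (mul_le_of_le_one_left (norm_nonneg y) ht.2.le).trans_lt (mem_ball_zero_iff.1 hy)
      simp [laplacian_comp_smul hu, hharm hty]
    · simp [notMem_support.1 fun h => hy (hPsupp h)]
  have hright (y : E) :
      fderiv ℝ (fun z => u (t • z)) y (-(ρ y • y)) = -(t • ρ y • fderiv ℝ u (t • y) y) := by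
    simp [fderiv_comp_smul, smul_comm t]
  have hzero : t • ∫ y, ρ y • fderiv ℝ u (t • y) y ∂μ = 0 := by
    simpa [hleft, hright, integral_neg, integral_smul] using hgreen.symm
  exact (smul_eq_zero.1 hzero).resolve_left ht.1.ne'

lemma integral_smul_eq_of_laplacian_eq_zero [CompleteSpace F] {r : ℝ} (hr : 0 ≤ r) {ρ : E → ℝ}
    (hρ : Continuous ρ) (hsupp : support ρ ⊆ ball 0 r) (hrad : ρ.FactorsThrough norm) {u : E → F}
    (hu : ContDiff ℝ 2 u) (hharm : EqOn (Δ u) 0 (ball 0 r)) :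
    ∫ y, ρ y • u y ∂μ = (∫ y, ρ y ∂μ) • u 0 := by
  have hρc : HasCompactSupport ρ := hasCompactSupport_of_support_subset_ball hsupp
  have hderiv := hasDerivAt_integral_smul_comp_smul (μ := μ) hρ hρc (hu.of_le one_le_two)
  have hconst := intervalIntegral.integral_eq_sub_of_hasDerivAt_of_le zero_le_one
    (fun t _ => (hderiv t).continuousAt.continuousWithinAt)
    (fun t ht => integral_smul_fderiv_smul_eq_zero (μ := μ) hr hρ hsupp hrad hu hharm ht ▸ hderiv t)
    intervalIntegrable_const
  exact sub_eq_zero.1 (by simpa [integral_smul_const] using hconst.symm)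

theorem convolution_eq_smul_of_laplacian_eq_zero [CompleteSpace F] {r : ℝ} (hr : 0 ≤ r) {ρ : E → ℝ}
    (hρ : Continuous ρ) (hsupp : support ρ ⊆ ball 0 r) (hrad : ρ.FactorsThrough norm) {u : E → F}
    (hu : ContDiff ℝ 2 u) {x : E} (hharm : EqOn (Δ u) 0 (ball x r)) :
    (ρ ⋆[lsmul ℝ ℝ, μ] u) x = (∫ y, ρ y ∂μ) • u x := by
  have hharm' : EqOn (Δ fun y => u (x - y)) 0 (ball 0 r) := fun y hy => by
    rw [laplacian_comp_const_sub hu]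
    exact hharm (by simpa using hy)
  simpa [convolution_lsmul] using
    integral_smul_eq_of_laplacian_eq_zero (μ := μ) hr hρ hsupp hrad (by fun_prop) hharm'

end Radial

section WeaklyHarmonic

variable [FiniteDimensional ℝ E] [MeasurableSpace E]

/-- Distributional harmonicity of `f` on `U`, tested against real-valued test functions. The
integral runs over the whole space because `Δ φ` vanishes off `U`; in particular the values of `f`
off `U` are irrelevant. -/
def IsWeaklyHarmonicOn (f : E → F) (U : Set E) (μ : Measure E) : Prop :=
  ∀ φ : E → ℝ, ContDiff ℝ ∞ φ → HasCompactSupport φ → tsupport φ ⊆ U →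
    ∫ x, Δ φ x • f x ∂μ = 0

namespace IsWeaklyHarmonicOn

variable {f g : E → F} {U V : Set E} {μ : Measure E}

lemma mono (hf : IsWeaklyHarmonicOn f V μ) (hUV : U ⊆ V) : IsWeaklyHarmonicOn f U μ :=
  fun φ hφ hφc hφU => hf φ hφ hφc (hφU.trans hUV)

lemma congr (hf : IsWeaklyHarmonicOn f U μ) (hfg : EqOn f g U) : IsWeaklyHarmonicOn g U μ := by
  intro φ hφ hφc hφU
  rw [← hf φ hφ hφc hφU]
  refine integral_congr_ae (.of_forall fun x => ?_)
  by_cases hx : x ∈ U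
  · simp only [hfg hx]
  · simp [notMem_support.1 fun h => hx (hφU (support_laplacian_subset φ h))]

variable [BorelSpace E] [μ.IsAddHaarMeasure]

lemma laplacian_convolution_eq_zero (hgU : IsWeaklyHarmonicOn g U μ) (hg : LocallyIntegrable g μ)
    {ψ : E → ℝ} (hψ : ContDiff ℝ ∞ ψ) (hψc : HasCompactSupport ψ) {y : E}
    (hy : tsupport (fun x => ψ (y - x)) ⊆ U) :
    Δ (g ⋆[(lsmul ℝ ℝ).flip, μ] ψ) y = 0 := by
  have hψ2 : ContDiff ℝ 2 ψ := contDiff_infty.1 hψ 2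
  rw [laplacian_convolution_right _ hg hψ2 hψc]
  simpa [convolution_def, laplacian_comp_const_sub hψ2] using
    hgU (fun x => ψ (y - x)) (by fun_prop) (hψc.comp_homeomorph (Homeomorph.subLeft y)) hy

end IsWeaklyHarmonicOn
end WeaklyHarmonic

section Mollification

variable [FiniteDimensional ℝ E] [MeasurableSpace E] [BorelSpace E] {μ : Measure E}
  [μ.IsAddHaarMeasure] [CompleteSpace F] {r : ℝ} {ρ ψ : E → ℝ} {f g : E → F} {U V Ω : Set E}

lemma convolution_assoc_lsmul (hρ : Continuous ρ) (hρc : HasCompactSupport ρ)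
    (hg : LocallyIntegrable g μ) (hψ : Continuous ψ) (hψc : HasCompactSupport ψ) (x : E) :
    ((ρ ⋆[lsmul ℝ ℝ, μ] g) ⋆[(lsmul ℝ ℝ).flip, μ] ψ) x
      = (ρ ⋆[lsmul ℝ ℝ, μ] (g ⋆[(lsmul ℝ ℝ).flip, μ] ψ)) x := by
  have hg_norm : LocallyIntegrable (fun y => ‖g y‖) μ := fun y => (hg y).norm
  exact convolution_assoc _ _ _ _ (fun a b c => smul_comm c a b) hρ.aestronglyMeasurable
    hg.aestronglyMeasurable hψ.aestronglyMeasurable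
    (.of_forall (hρc.convolutionExists_left _ hρ hg))
    (.of_forall (hψc.norm.convolutionExists_right _ hg_norm hψ.norm))
    (hρc.norm.convolutionExists_left _ hρ.norm
      (hψc.norm.continuous_convolution_right _ hg_norm hψ.norm).locallyIntegrable x)

lemma IsWeaklyHarmonicOn.convolution_convolution_eq_smul (hgU : IsWeaklyHarmonicOn g U μ)
    (hg : LocallyIntegrable g μ) (hr : 0 ≤ r) (hρ : Continuous ρ) (hsupp : support ρ ⊆ ball 0 r)
    (hrad : ρ.FactorsThrough norm) (hψ : ContDiff ℝ ∞ ψ) (hψc : HasCompactSupport ψ) {x : E}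
    (hψU : ∀ y ∈ ball x r, tsupport (fun z => ψ (y - z)) ⊆ U) :
    ((ρ ⋆[lsmul ℝ ℝ, μ] g) ⋆[(lsmul ℝ ℝ).flip, μ] ψ) x
      = (∫ y, ρ y ∂μ) • (g ⋆[(lsmul ℝ ℝ).flip, μ] ψ) x := by
  have hρc : HasCompactSupport ρ := hasCompactSupport_of_support_subset_ball hsupp
  have hu : ContDiff ℝ 2 (g ⋆[(lsmul ℝ ℝ).flip, μ] ψ) :=
    hψc.contDiff_convolution_right _ hg (contDiff_infty.1 hψ 2)
  have hharm : EqOn (Δ (g ⋆[(lsmul ℝ ℝ).flip, μ] ψ)) 0 (ball x r) := fun y hy =>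
    hgU.laplacian_convolution_eq_zero hg hψ hψc (hψU y hy)
  rw [convolution_assoc_lsmul hρ hρc hg hψ.continuous hψc,
    convolution_eq_smul_of_laplacian_eq_zero hr hρ hsupp hrad hu hharm]

lemma IsWeaklyHarmonicOn.ae_convolution_eq_smul (hgU : IsWeaklyHarmonicOn g U μ)
    (hg : LocallyIntegrable g μ) (hr : 0 ≤ r) (hρ : Continuous ρ) (hsupp : support ρ ⊆ ball 0 r)
    (hrad : ρ.FactorsThrough norm) (hV : IsOpen V) (hVU : thickening r V ⊆ U) :
    ∀ᵐ x ∂μ.restrict V, (ρ ⋆[lsmul ℝ ℝ, μ] g) x = (∫ y, ρ y ∂μ) • g x := by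
  have hρc : HasCompactSupport ρ := hasCompactSupport_of_support_subset_ball hsupp
  have hG : LocallyIntegrable (ρ ⋆[lsmul ℝ ℝ, μ] g) μ :=
    (hρc.continuous_convolution_left _ hρ hg).locallyIntegrable
  have hcg : LocallyIntegrable (fun x => (∫ y, ρ y ∂μ) • g x) μ := hg.smul _
  rw [ae_restrict_iff' hV.measurableSet]
  suffices h : ∀ᵐ x ∂μ, x ∈ V → (ρ ⋆[lsmul ℝ ℝ, μ] g) x - (∫ y, ρ y ∂μ) • g x = 0 from
    h.mono fun x hx hxV => sub_eq_zero.1 (hx hxV)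
  refine hV.ae_eq_zero_of_integral_contDiff_smul_eq_zero ((hG.sub hcg).locallyIntegrableOn V)
    fun φ hφ hφc hφV => ?_
  let ψ : E → ℝ := fun x => φ (-x)
  have hψ : ContDiff ℝ ∞ ψ := by fun_prop
  have hψc : HasCompactSupport ψ := hφc.comp_homeomorph (Homeomorph.neg E)
  have hpairing (h : E → F) : ∫ x, φ x • h x ∂μ = (h ⋆[(lsmul ℝ ℝ).flip, μ] ψ) 0 := by
    simp [convolution_def, ψ]
  have hψU : ∀ y ∈ ball (0 : E) r, tsupport (fun z => ψ (y - z)) ⊆ U := fun y hy => by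
    have hψφ : (fun z => ψ (y - z)) = φ ∘ Homeomorph.subRight y := by
      ext z
      simp [ψ]
    rw [hψφ, tsupport_comp_eq_preimage]
    refine fun z hz => hVU (mem_thickening_iff.2 ⟨z - y, hφV hz, ?_⟩)
    simpa [dist_eq_norm] using hy
  have hint {h : E → F} (hh : LocallyIntegrable h μ) : Integrable (fun x => φ x • h x) μ :=
    hh.integrable_smul_left_of_hasCompactSupport hφ.continuous hφc
  simp_rw [smul_sub]
  rw [integral_sub (hint hG) (hint hcg), sub_eq_zero]
  calc ∫ x, φ x • (ρ ⋆[lsmul ℝ ℝ, μ] g) x ∂μ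
      = (∫ y, ρ y ∂μ) • (g ⋆[(lsmul ℝ ℝ).flip, μ] ψ) 0 := by
        rw [hpairing, hgU.convolution_convolution_eq_smul hg hr hρ hsupp hrad hψ hψc hψU]
    _ = ∫ x, φ x • (∫ y, ρ y ∂μ) • g x ∂μ := by
        simp_rw [← hpairing, ← integral_smul, smul_comm (∫ y, ρ y ∂μ)]

theorem mollification_eq_of_distributionally_harmonic_general (hΩ : IsOpen Ω)
    (hf : LocallyIntegrableOn f Ω μ) (hfΩ : IsWeaklyHarmonicOn f Ω μ) (hr : 0 ≤ r)
    (hρ : Continuous ρ) (hsupp : support ρ ⊆ ball 0 r) (hrad : ρ.FactorsThrough norm) :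
    ∀ᵐ x ∂μ.restrict {x | closedBall x r ⊆ Ω},
      (ρ ⋆[lsmul ℝ ℝ, μ] f) x = (∫ y, ρ y ∂μ) • f x := by
  refine ae_restrict_of_forall_exists_mem_nhdsWithin fun x₀ hx₀ => ?_
  obtain ⟨δ, hδ, hK⟩ := exists_closedBall_add_subset hΩ hr hx₀
  let g := (closedBall x₀ (r + δ)).indicator f
  have hfK : IntegrableOn f (closedBall x₀ (r + δ)) μ :=
    hf.integrableOn_compact_subset hK (isCompact_closedBall x₀ (r + δ))
  have hg : LocallyIntegrable g μ :=
    (hfK.integrable_indicator measurableSet_closedBall).locallyIntegrable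
  have hfg : EqOn f g (ball x₀ (r + δ)) := fun x hx =>
    (indicator_of_mem (ball_subset_closedBall hx) f).symm
  have hgU : IsWeaklyHarmonicOn g (ball x₀ (r + δ)) μ :=
    (hfΩ.mono (ball_subset_closedBall.trans hK)).congr hfg
  refine ⟨ball x₀ δ, mem_nhdsWithin_of_mem_nhds (ball_mem_nhds x₀ hδ), ?_⟩
  filter_upwards [hgU.ae_convolution_eq_smul hg hr hρ hsupp hrad isOpen_ball
    (Metric.thickening_ball x₀ r δ), ae_restrict_mem measurableSet_ball] with x hx hxδ
  have hball : ball x r ⊆ ball x₀ (r + δ) := ball_subset_ball' (by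
    have := mem_ball.1 hxδ
    linarith)
  rw [convolution_congr_ball hsupp (hfg.mono hball), hx,
    hfg (ball_subset_ball (by linarith) hxδ)]

end Mollification

end

section StandardLaplacian

variable {d : ℕ}

lemma lap_eq_laplacian {φ : EuclideanSpace ℝ (Fin d) → ℝ} (hφ : ContDiff ℝ 2 φ) : lap φ = Δ φ := by
  ext x
  simp [laplacian_eq_sum_fderiv_fderiv (EuclideanSpace.basisFun (Fin d) ℝ) hφ, lap, stdBasis]

lemma isWeaklyHarmonicOn_of_setIntegral_mul_lap_eq_zero {Ω : Set (EuclideanSpace ℝ (Fin d))}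
    {f : EuclideanSpace ℝ (Fin d) → ℝ}
    (hf : ∀ φ : EuclideanSpace ℝ (Fin d) → ℝ, ContDiff ℝ ∞ φ → HasCompactSupport φ →
      tsupport φ ⊆ Ω → ∫ x in Ω, f x * lap φ x = 0) :
    IsWeaklyHarmonicOn f Ω volume := by
  intro φ hφ hφc hφΩ
  rw [← setIntegral_eq_integral_of_forall_compl_eq_zero (s := Ω) fun x hx => by
    simp [notMem_support.1 fun h => hx (hφΩ (support_laplacian_subset φ h))]]
  simpa [lap_eq_laplacian (contDiff_infty.1 hφ 2), mul_comm] using hf φ hφ hφc hφΩ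

end StandardLaplacian

/-- If `f ∈ L¹_loc(Ω, ℝ)` is distributionally harmonic and `ρ` is a
radial mollifier supported in `B(0, r)`, then `ρ ∗ f = f` a.e. on
`Ω_r = {ξ ∈ Ω : dist(ξ, ∂Ω) > r} = {ξ : closedBall ξ r ⊆ Ω}`. -/
theorem mollification_eq_of_distributionally_harmonic {d : ℕ}
    {Ω : Set (EuclideanSpace ℝ (Fin d))} (hΩ : IsOpen Ω)
    (f : EuclideanSpace ℝ (Fin d) → ℝ) (hf : LocallyIntegrableOn f Ω)
    (hweak : ∀ φ : EuclideanSpace ℝ (Fin d) → ℝ, ContDiff ℝ (⊤ : ℕ∞) φ →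
      HasCompactSupport φ → tsupport φ ⊆ Ω → ∫ ξ in Ω, f ξ * lap φ ξ = 0)
    (r : ℝ) (hr : 0 < r) (ρ : EuclideanSpace ℝ (Fin d) → ℝ)
    (hρ_smooth : ContDiff ℝ (⊤ : ℕ∞) ρ)
    (hρ_supp : Function.support ρ ⊆ Metric.ball 0 r)
    (hρ_nonneg : ∀ x, 0 ≤ ρ x) (hρ_int : ∫ x, ρ x = 1)
    (hρ_radial : ∀ x y : EuclideanSpace ℝ (Fin d), ‖x‖ = ‖y‖ → ρ x = ρ y) :
    ∀ᵐ ξ ∂(volume.restrict {ξ : EuclideanSpace ℝ (Fin d) |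
        ξ ∈ Ω ∧ Metric.closedBall ξ r ⊆ Ω}),
      ∫ η in Metric.ball (0 : EuclideanSpace ℝ (Fin d)) r, ρ η * f (ξ - η) = f ξ := by
  have hconv := mollification_eq_of_distributionally_harmonic_general hΩ hf
    (isWeaklyHarmonicOn_of_setIntegral_mul_lap_eq_zero hweak) hr.le hρ_smooth.continuous hρ_supp
    fun _ _ h => hρ_radial _ _ h
  filter_upwards [ae_restrict_of_ae_restrict_of_subset (fun _ hξ => hξ.2) hconv] with ξ hξ
  rw [setIntegral_eq_integral_of_forall_compl_eq_zero fun η hη => by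
    simp [notMem_support.1 fun h => hη (hρ_supp h)]]
  simpa [convolution_lsmul, hρ_int] using hξ
end

section
/- Let d ≥ 2, let X be a real Banach space, and let f ∈ L¹(ℝ^d, X) have compact support. Then the Newtonian potential Φ ∗ f, given by (Φ ∗ f)(ξ) = ∫_{ℝ^d} Φ(ξ−η) f(η) dη, is defined for almost every ξ ∈ ℝ^d, belongs to L¹_loc(ℝ^d, X), and satisfies Poisson's equation Δ(Φ ∗ f) = f in the sense of distributions: ∫_{ℝ^d} (Φ ∗ f)(ξ) Δφ(ξ) dξ = ∫_{ℝ^d} f(ξ) φ(ξ) dξ for every φ ∈ C_c^∞(ℝ^d, ℝ). -/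
open MeasureTheory

/-- The fundamental solution of the Laplace equation on `ℝ^d`. -/
noncomputable def fundSol (d : ℕ) (ξ : EuclideanSpace ℝ (Fin d)) : ℝ :=
  if d = 2 then (2 * Real.pi)⁻¹ * Real.log ‖ξ‖
  else ((d : ℝ) * ((2 : ℝ) - d) *
      (volume (Metric.ball (0 : EuclideanSpace ℝ (Fin d)) 1)).toReal)⁻¹ *
    ‖ξ‖ ^ ((2 : ℝ) - d)

/-!
Replacing `‖x‖` by `√(‖x‖ ^ 2 + t)` in `Φ` gives a smooth function `Φ_t` whose Laplacian is the
rescaling by `(√t)⁻¹` of a single nonnegative kernel of mass one, that is, an approximation of the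
Dirac mass. Green's identity reads `∫ Φ_t Δψ = ∫ ΔΦ_t ψ`; as `t` decreases to `0` the right-hand
side tends to `ψ 0`, while the left-hand side tends to `∫ Φ Δψ` by dominated convergence, because
`Φ_t` is monotone in `t` and hence lies between `Φ` and `Φ_1`. Thus `ΔΦ` is the Dirac mass, and
Fubini's theorem, legitimate since `f` and the test function have compact support and `Φ` is locally
integrable, carries this over to `Φ ∗ f`.
-/

open Filter Topology Set Module Convolution
open scoped Pointwise

section CompactlySupportedConvolution

variable {𝕜 G E E' F : Type*}
  [NormedAddCommGroup E] [NormedAddCommGroup E'] [NormedAddCommGroup F]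
  [AddCommGroup G] [TopologicalSpace G] [IsTopologicalAddGroup G] [T2Space G]
  [MeasurableSpace G] [BorelSpace G] [MeasurableAdd₂ G]
  {μ ν : Measure G} [μ.IsAddRightInvariant] [SFinite μ] [SFinite ν] {f : G → E} {g : G → E'}

section NontriviallyNormedField

variable [NontriviallyNormedField 𝕜] [NormedSpace 𝕜 E] [NormedSpace 𝕜 E'] [NormedSpace 𝕜 F]
  (L : E →L[𝕜] E' →L[𝕜] F)

-- For `x ∈ K`, the integrand only sees `g` on the compact set `K - tsupport f`.
lemma integrable_convolution_integrand_restrict (hf : Integrable f ν) (hcf : HasCompactSupport f)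
    (hg : LocallyIntegrable g μ) {K : Set G} (hK : IsCompact K) :
    Integrable (fun p : G × G ↦ L (f p.2) (g (p.1 - p.2))) ((μ.restrict K).prod ν) := by
  have hS : IsCompact (K - tsupport f) := by
    rw [sub_eq_add_neg]
    exact hK.add (IsCompact.neg hcf)
  have hgS : Integrable ((K - tsupport f).indicator g) μ :=
    (hg.integrableOn_isCompact hS).integrable_indicator hS.measurableSet
  have hprod : (μ.restrict K).prod ν = (μ.prod ν).restrict (K ×ˢ univ) := by
    rw [← Measure.prod_restrict, Measure.restrict_univ]
  rw [hprod]
  refine IntegrableOn.congr_fun (hf.convolution_integrand L hgS).integrableOn ?_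
    (hK.measurableSet.prod .univ)
  rintro ⟨x, y⟩ ⟨hx, -⟩
  by_cases hy : y ∈ tsupport f
  · simp only [indicator_of_mem (sub_mem_sub hx hy)]
  · simp only [image_eq_zero_of_notMem_tsupport hy, map_zero, zero_apply]

lemma ae_convolutionExistsAt_of_hasCompactSupport [SigmaCompactSpace G] (hf : Integrable f ν)
    (hcf : HasCompactSupport f) (hg : LocallyIntegrable g μ) :
    ∀ᵐ x ∂μ, ConvolutionExistsAt f g x L ν := by
  rw [← Measure.restrict_univ (μ := μ), ← iUnion_compactCovering, ae_restrict_iUnion_iff]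
  exact fun n ↦ (integrable_convolution_integrand_restrict L hf hcf hg
    (isCompact_compactCovering G n)).prod_right_ae

lemma locallyIntegrable_convolution_of_hasCompactSupport [LocallyCompactSpace G] [NormedSpace ℝ F]
    (hf : Integrable f ν) (hcf : HasCompactSupport f) (hg : LocallyIntegrable g μ) :
    LocallyIntegrable (f ⋆[L, ν] g) μ :=
  locallyIntegrable_iff.2 fun _ hK ↦
    (integrable_convolution_integrand_restrict L hf hcf hg hK).integral_prod_left

end NontriviallyNormedField

section RCLike

variable [RCLike 𝕜] [NormedSpace 𝕜 E] [NormedSpace 𝕜 E'] [NormedSpace 𝕜 F]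
  [NormedSpace ℝ E'] [NormedSpace ℝ F] [CompleteSpace E'] [CompleteSpace F]
  (L : E →L[𝕜] E' →L[𝕜] F)

lemma integral_smul_convolution_of_hasCompactSupport
    (hf : Integrable f ν) (hcf : HasCompactSupport f) (hg : LocallyIntegrable g μ)
    {ψ : G → 𝕜} (hψ : Continuous ψ) (hcψ : HasCompactSupport ψ) :
    ∫ x, ψ x • (f ⋆[L, ν] g) x ∂μ = ∫ y, L (f y) (∫ x, ψ x • g (x - y) ∂μ) ∂ν := by
  have h_int : Integrable (fun p : G × G ↦ ψ p.1 • L (f p.2) (g (p.1 - p.2)))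
      ((μ.restrict (tsupport ψ)).prod ν) := by
    obtain ⟨C, hC⟩ := hcψ.exists_bound_of_continuous hψ
    exact (integrable_convolution_integrand_restrict L hf hcf hg hcψ).bdd_smul C
      hψ.aestronglyMeasurable.comp_fst (.of_forall fun p ↦ hC p.1)
  have h_translate (y : G) : Integrable (fun x ↦ ψ x • g (x - y)) μ := by
    have := (hg.integrable_smul_left_of_hasCompactSupport
      (hψ.comp (continuous_add_const y)) (hcψ.comp_homeomorph (.addRight y))).comp_sub_right y
    simpa using this
  calc ∫ x, ψ x • (f ⋆[L, ν] g) x ∂μ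
    _ = ∫ x in tsupport ψ, ψ x • (f ⋆[L, ν] g) x ∂μ :=
      (setIntegral_eq_integral_of_forall_compl_eq_zero fun x hx ↦ by
        rw [image_eq_zero_of_notMem_tsupport hx, zero_smul]).symm
    _ = ∫ x in tsupport ψ, ∫ y, ψ x • L (f y) (g (x - y)) ∂ν ∂μ := by
      simp only [convolution_def, integral_smul]
    _ = ∫ y, ∫ x in tsupport ψ, ψ x • L (f y) (g (x - y)) ∂μ ∂ν := integral_integral_swap h_int
    _ = ∫ y, ∫ x, L (f y) (ψ x • g (x - y)) ∂μ ∂ν := by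
      congr! 2 with y
      simp only [map_smul]
      exact setIntegral_eq_integral_of_forall_compl_eq_zero fun x hx ↦ by
        rw [image_eq_zero_of_notMem_tsupport hx, zero_smul]
    _ = ∫ y, L (f y) (∫ x, ψ x • g (x - y) ∂μ) ∂ν := by
      congr! 2 with y
      exact (L (f y)).integral_comp_comm (h_translate y)

end RCLike

end CompactlySupportedConvolution

lemma contDiff_fderiv_apply_const {𝕜 E F : Type*} [NontriviallyNormedField 𝕜]
    [NormedAddCommGroup E] [NormedSpace 𝕜 E] [NormedAddCommGroup F] [NormedSpace 𝕜 F]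
    {m n : WithTop ℕ∞} {u : E → F} (hu : ContDiff 𝕜 n u) (hmn : m + 1 ≤ n) (v : E) :
    ContDiff 𝕜 m (fderiv 𝕜 u · v) :=
  (hu.fderiv_right hmn).clm_apply contDiff_const

section NormedSpace

variable {E F : Type*} [NormedAddCommGroup E] [NormedSpace ℝ E] [FiniteDimensional ℝ E]
  [MeasurableSpace E] [BorelSpace E] {μ : Measure E} [μ.IsAddHaarMeasure]

lemma locallyIntegrable_comp_norm [Nontrivial E] [NormedAddCommGroup F] [NormedSpace ℝ F]
    {g : ℝ → F} (hg : ∀ R, IntegrableOn (fun r ↦ r ^ (finrank ℝ E - 1) • g r) (Ioo 0 R)) :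
    LocallyIntegrable (fun x : E ↦ g ‖x‖) μ := by
  have : ProperSpace E := FiniteDimensional.proper ℝ E
  refine locallyIntegrable_iff.2 fun K hK ↦ ?_
  obtain ⟨R, hR⟩ := hK.isBounded.subset_ball 0
  exact ((integrableOn_fun_norm_addHaar μ).2 (hg R)).mono_set hR

lemma integral_mul_fderiv_eq_neg_of_hasCompactSupport {u ψ : E → ℝ} (hu : ContDiff ℝ 1 u)
    (hψ : ContDiff ℝ 1 ψ) (hcψ : HasCompactSupport ψ) (v : E) :
    ∫ x, u x * fderiv ℝ ψ x v ∂μ = -∫ x, fderiv ℝ u x v * ψ x ∂μ := by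
  have hu' : Continuous (fderiv ℝ u · v) :=
    (contDiff_fderiv_apply_const hu (zero_add 1).le v).continuous
  have hψ' : Continuous (fderiv ℝ ψ · v) :=
    (contDiff_fderiv_apply_const hψ (zero_add 1).le v).continuous
  exact integral_mul_fderiv_eq_neg_fderiv_mul_of_integrable
    ((hu'.mul hψ.continuous).integrable_of_hasCompactSupport hcψ.mul_left)
    ((hu.continuous.mul hψ').integrable_of_hasCompactSupport (hcψ.fderiv_apply ℝ v).mul_left)
    ((hu.continuous.mul hψ.continuous).integrable_of_hasCompactSupport hcψ.mul_left)
    (fun x _ ↦ hu.differentiable one_ne_zero x) (fun x _ ↦ hψ.differentiable one_ne_zero x)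

end NormedSpace

section Laplacian

variable {d : ℕ} {u ψ : EuclideanSpace ℝ (Fin d) → ℝ}

lemma continuous_fderiv_fderiv_apply (hu : ContDiff ℝ 2 u) (v : EuclideanSpace ℝ (Fin d)) :
    Continuous fun x ↦ fderiv ℝ (fderiv ℝ u · v) x v :=
  (contDiff_fderiv_apply_const (contDiff_fderiv_apply_const hu one_add_one_eq_two.le v)
    (zero_add 1).le v).continuous

lemma continuous_lap (hu : ContDiff ℝ 2 u) : Continuous (lap u) :=
  continuous_finsetSum _ fun _ _ ↦ continuous_fderiv_fderiv_apply hu _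

lemma hasCompactSupport_lap (hcψ : HasCompactSupport ψ) : HasCompactSupport (lap ψ) := by
  refine HasCompactSupport.intro hcψ fun x hx ↦ Finset.sum_eq_zero fun i _ ↦ ?_
  exact image_eq_zero_of_notMem_tsupport (f := (fderiv ℝ (fderiv ℝ ψ · (stdBasis i)) · _))
    fun h ↦ hx (tsupport_fderiv_apply_subset ℝ _ (tsupport_fderiv_apply_subset ℝ _ h))

lemma lap_comp_add_right (u : EuclideanSpace ℝ (Fin d) → ℝ) (y x : EuclideanSpace ℝ (Fin d)) :
    lap (fun z ↦ u (z + y)) x = lap u (x + y) := by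
  simp only [lap, fderiv_comp_add_right]
  exact Finset.sum_congr rfl fun i _ ↦ by
    rw [fderiv_comp_add_right (f := (fderiv ℝ u · (stdBasis i)))]

lemma lap_comp_norm_sq {g g' : ℝ → ℝ} {g'' : ℝ} {x : EuclideanSpace ℝ (Fin d)}
    (hg : ∀ᶠ s in 𝓝 (‖x‖ ^ 2), HasDerivAt g (g' s) s) (hg' : HasDerivAt g' g'' (‖x‖ ^ 2)) :
    lap (fun y ↦ g (‖y‖ ^ 2)) x = 4 * ‖x‖ ^ 2 * g'' + 2 * d * g' (‖x‖ ^ 2) := by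
  have h_sq (y : EuclideanSpace ℝ (Fin d)) : HasFDerivAt (fun z ↦ ‖z‖ ^ 2) (2 • innerSL ℝ y) y :=
    (hasStrictFDerivAt_norm_sq y).hasFDerivAt
  have h_fst (i : Fin d) : (fun y ↦ fderiv ℝ (fun y ↦ g (‖y‖ ^ 2)) y (stdBasis i)) =ᶠ[𝓝 x]
      fun y ↦ g' (‖y‖ ^ 2) * (2 * y i) := by
    filter_upwards [((continuous_norm.pow 2).tendsto x).eventually hg] with y hy
    have h_deriv : HasFDerivAt (fun y ↦ g (‖y‖ ^ 2)) (g' (‖y‖ ^ 2) • 2 • innerSL ℝ y) y :=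
      hy.comp_hasFDerivAt y (h_sq y)
    rw [h_deriv.fderiv]
    simp [stdBasis, EuclideanSpace.inner_single_right]
  have h_snd (i : Fin d) : fderiv ℝ (fun y ↦ g' (‖y‖ ^ 2) * (2 * y i)) x (stdBasis i) =
      4 * g'' * x i ^ 2 + 2 * g' (‖x‖ ^ 2) := by
    have h_coord : HasFDerivAt (fun y : EuclideanSpace ℝ (Fin d) ↦ y i)
        (EuclideanSpace.proj i : EuclideanSpace ℝ (Fin d) →L[ℝ] ℝ) x :=
      (EuclideanSpace.proj i : EuclideanSpace ℝ (Fin d) →L[ℝ] ℝ).hasFDerivAt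
    have h_deriv : HasFDerivAt (fun y ↦ g' (‖y‖ ^ 2)) (g'' • 2 • innerSL ℝ x) x :=
      hg'.comp_hasFDerivAt x (h_sq x)
    rw [(h_deriv.fun_mul (h_coord.const_mul 2)).fderiv]
    simp [stdBasis, EuclideanSpace.inner_single_right]
    ring
  simp only [lap, (h_fst _).fderiv_eq, h_snd, Finset.sum_add_distrib, ← Finset.mul_sum,
    ← EuclideanSpace.real_norm_sq_eq, Finset.sum_const, Finset.card_univ, Fintype.card_fin,
    nsmul_eq_mul]
  ring

lemma integral_mul_lap_eq_integral_lap_mul (hu : ContDiff ℝ 2 u) (hψ : ContDiff ℝ 2 ψ)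
    (hcψ : HasCompactSupport ψ) : ∫ x, u x * lap ψ x = ∫ x, lap u x * ψ x := by
  have h_fst {w : EuclideanSpace ℝ (Fin d) → ℝ} (hw : ContDiff ℝ 2 w) (v) :
      ContDiff ℝ 1 (fderiv ℝ w · v) :=
    contDiff_fderiv_apply_const hw one_add_one_eq_two.le v
  have h_twice (v) : ∫ x, u x * fderiv ℝ (fderiv ℝ ψ · v) x v =
      ∫ x, fderiv ℝ (fderiv ℝ u · v) x v * ψ x := by
    rw [integral_mul_fderiv_eq_neg_of_hasCompactSupport (hu.of_le one_le_two) (h_fst hψ v)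
        (hcψ.fderiv_apply ℝ v),
      integral_mul_fderiv_eq_neg_of_hasCompactSupport (h_fst hu v) (hψ.of_le one_le_two) hcψ,
      neg_neg]
  simp only [lap, Finset.mul_sum, Finset.sum_mul]
  rw [integral_finsetSum, integral_finsetSum]
  · exact Finset.sum_congr rfl fun i _ ↦ h_twice _
  · exact fun i _ ↦ ((continuous_fderiv_fderiv_apply hu _).mul
      hψ.continuous).integrable_of_hasCompactSupport hcψ.mul_left
  · exact fun i _ ↦ (hu.continuous.mul
      (continuous_fderiv_fderiv_apply hψ _)).integrable_of_hasCompactSupport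
      ((hcψ.fderiv_apply ℝ _).fderiv_apply ℝ _).mul_left

end Laplacian

section FundamentalSolution

/-- The Lebesgue measure of the unit ball of `ℝ^d`, the constant in the fundamental solution. -/
noncomputable def unitBallVolume (d : ℕ) : ℝ :=
  volume.real (Metric.ball (0 : EuclideanSpace ℝ (Fin d)) 1)

/-- The fundamental solution of the Laplace equation on `ℝ^d` as a function of the squared norm,
which, unlike the norm, is smooth at the origin. -/
noncomputable def fundSolProfile (d : ℕ) (s : ℝ) : ℝ :=
  if d = 2 then (4 * Real.pi)⁻¹ * Real.log s
  else (d * (2 - d) * unitBallVolume d)⁻¹ * s ^ ((2 - d : ℝ) / 2)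

/-- For `t > 0`, a smooth approximation of the fundamental solution of the Laplace equation,
obtained by replacing `‖x‖` by `√(‖x‖ ^ 2 + t)`. -/
noncomputable def regularizedFundSol (d : ℕ) (t : ℝ) (x : EuclideanSpace ℝ (Fin d)) : ℝ :=
  fundSolProfile d (‖x‖ ^ 2 + t)

/-- The Laplacian of `regularizedFundSol d t`, an approximation of the Dirac mass at the origin
as `t` decreases to `0`. -/
noncomputable def regularizedDelta (d : ℕ) (t : ℝ) (x : EuclideanSpace ℝ (Fin d)) : ℝ :=
  (unitBallVolume d)⁻¹ * (t * (‖x‖ ^ 2 + t) ^ (-d / 2 - 1 : ℝ))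

variable {d : ℕ}

lemma unitBallVolume_pos (d : ℕ) : 0 < unitBallVolume d :=
  ENNReal.toReal_pos (Metric.measure_ball_pos _ _ one_pos).ne' measure_ball_lt_top.ne

lemma unitBallVolume_two : unitBallVolume 2 = Real.pi := by
  simp [unitBallVolume, Measure.real, EuclideanSpace.volume_ball_fin_two, Real.pi_pos.le]

lemma pow_mul_sq_rpow_neg_half {r : ℝ} (hr : 0 < r) (n : ℕ) :
    r ^ n * (r ^ 2) ^ (-n / 2 : ℝ) = 1 := by
  rw [← Real.rpow_natCast, ← Real.rpow_natCast r 2, ← Real.rpow_mul hr.le, ← Real.rpow_add hr]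
  convert Real.rpow_zero r using 2
  push_cast
  ring

lemma fundSol_eq_fundSolProfile (x : EuclideanSpace ℝ (Fin d)) :
    fundSol d x = fundSolProfile d (‖x‖ ^ 2) := by
  unfold fundSol fundSolProfile
  split_ifs
  · rw [Real.log_pow]
    push_cast
    ring
  · rw [← Real.rpow_natCast, ← Real.rpow_mul (norm_nonneg _), Nat.cast_ofNat,
      mul_div_cancel₀ _ two_ne_zero]
    rfl

lemma contDiffAt_fundSolProfile {n : WithTop ℕ∞} {s : ℝ} (hs : 0 < s) :
    ContDiffAt ℝ n (fundSolProfile d) s := by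
  unfold fundSolProfile
  split_ifs
  · exact contDiffAt_const.mul (Real.contDiffAt_log.2 hs.ne')
  · exact contDiffAt_const.mul (Real.contDiffAt_rpow_const_of_ne hs.ne')

lemma hasDerivAt_fundSolProfile [NeZero d] {s : ℝ} (hs : 0 < s) :
    HasDerivAt (fundSolProfile d) ((2 * d * unitBallVolume d)⁻¹ * s ^ (-d / 2 : ℝ)) s := by
  have hd : (d : ℝ) ≠ 0 := NeZero.ne _
  have hV := (unitBallVolume_pos d).ne'
  unfold fundSolProfile
  split_ifs with h
  · subst h
    refine ((Real.hasDerivAt_log hs.ne').const_mul (4 * Real.pi)⁻¹).congr_deriv ?_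
    rw [unitBallVolume_two]
    norm_num [Real.rpow_neg_one]
  · have hd2 : (2 - d : ℝ) ≠ 0 := sub_ne_zero.2 (by exact_mod_cast Ne.symm h)
    refine ((Real.hasDerivAt_rpow_const (.inl hs.ne')).const_mul _).congr_deriv ?_
    rw [show (2 - d : ℝ) / 2 - 1 = -d / 2 by ring]
    field_simp

lemma monotoneOn_fundSolProfile [NeZero d] : MonotoneOn (fundSolProfile d) (Ioi 0) := by
  refine monotoneOn_of_hasDerivWithinAt_nonneg (convex_Ioi 0)
    (fun s hs ↦ (hasDerivAt_fundSolProfile hs).continuousAt.continuousWithinAt)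
    (fun s hs ↦ (hasDerivAt_fundSolProfile (interior_subset hs)).hasDerivWithinAt) fun s hs ↦ ?_
  have := unitBallVolume_pos d
  have : 0 < s := interior_subset hs
  positivity

lemma exists_continuous_eqOn_pow_mul_fundSolProfile [NeZero d] :
    ∃ h : ℝ → ℝ, Continuous h ∧
      EqOn (fun r ↦ r ^ (d - 1) * fundSolProfile d (r ^ 2)) h (Ioi 0) := by
  by_cases h : d = 2
  · subst h
    refine ⟨fun r ↦ (2 * Real.pi)⁻¹ * (r * Real.log r),
      continuous_const.mul Real.continuous_mul_log, fun r _ ↦ ?_⟩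
    simp only [fundSolProfile, if_true, Real.log_pow]
    push_cast
    ring
  · refine ⟨fun r ↦ (d * (2 - d) * unitBallVolume d)⁻¹ * r, by fun_prop, fun r (hr : 0 < r) ↦ ?_⟩
    have h_pow : r ^ (d - 1) * (r ^ 2) ^ ((2 - d : ℝ) / 2) = r := by
      rw [show (2 - d : ℝ) / 2 = 1 + -d / 2 by ring, Real.rpow_add (by positivity), Real.rpow_one]
      calc r ^ (d - 1) * (r ^ 2 * (r ^ 2) ^ (-d / 2 : ℝ))
        _ = r ^ (d - 1) * r * (r ^ 2) ^ (-d / 2 : ℝ) * r := by ring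
        _ = r := by rw [pow_sub_one_mul (NeZero.ne d), pow_mul_sq_rpow_neg_half hr, one_mul]
    simp only [fundSolProfile, if_neg h]
    rw [mul_left_comm, h_pow]

lemma locallyIntegrable_fundSol [NeZero d] : LocallyIntegrable (fundSol d) := by
  obtain ⟨h, hh, heq⟩ := exists_continuous_eqOn_pow_mul_fundSolProfile (d := d)
  rw [funext fundSol_eq_fundSolProfile]
  refine locallyIntegrable_comp_norm (g := fun r ↦ fundSolProfile d (r ^ 2)) fun R ↦ ?_
  rw [finrank_euclideanSpace_fin]
  exact (hh.integrableOn_Icc.mono_set Ioo_subset_Icc_self).congr_fun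
    (fun r hr ↦ (heq hr.1).symm) measurableSet_Ioo

lemma contDiff_regularizedFundSol {n : WithTop ℕ∞} {t : ℝ} (ht : 0 < t) :
    ContDiff ℝ n (regularizedFundSol d t) :=
  contDiff_iff_contDiffAt.2 fun x ↦
    (contDiffAt_fundSolProfile (by positivity : 0 < ‖x‖ ^ 2 + t)).comp x
      ((contDiff_norm_sq ℝ).add contDiff_const).contDiffAt

lemma lap_regularizedFundSol [NeZero d] {t : ℝ} (ht : 0 < t) (x : EuclideanSpace ℝ (Fin d)) :
    lap (regularizedFundSol d t) x = regularizedDelta d t x := by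
  have hd : (d : ℝ) ≠ 0 := NeZero.ne _
  have hV := (unitBallVolume_pos d).ne'
  have h_pos : 0 < ‖x‖ ^ 2 + t := by positivity
  have h_fst : ∀ᶠ s in 𝓝 (‖x‖ ^ 2), HasDerivAt (fun s ↦ fundSolProfile d (s + t))
      ((2 * d * unitBallVolume d)⁻¹ * (s + t) ^ (-d / 2 : ℝ)) s := by
    filter_upwards [(continuous_add_const t).tendsto _ |>.eventually (lt_mem_nhds h_pos)] with s hs
    exact (hasDerivAt_fundSolProfile hs).comp_add_const s t
  have h_snd := ((Real.hasDerivAt_rpow_const (p := -d / 2) (.inl h_pos.ne')).comp_add_const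
    (‖x‖ ^ 2) t).const_mul (2 * d * unitBallVolume d)⁻¹
  have h_rpow : (‖x‖ ^ 2 + t) ^ (-d / 2 : ℝ) =
      (‖x‖ ^ 2 + t) ^ (-d / 2 - 1 : ℝ) * (‖x‖ ^ 2 + t) := by
    rw [Real.rpow_sub_one h_pos.ne', div_mul_cancel₀ _ h_pos.ne']
  refine (lap_comp_norm_sq h_fst h_snd).trans ?_
  rw [h_rpow, regularizedDelta]
  field_simp
  ring

lemma abs_regularizedFundSol_le [NeZero d] {t : ℝ} (ht : t ∈ Icc 0 1)
    {x : EuclideanSpace ℝ (Fin d)} (hx : x ≠ 0) :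
    |regularizedFundSol d t x| ≤ max |fundSol d x| |regularizedFundSol d 1 x| := by
  have hx : 0 < ‖x‖ ^ 2 := by positivity
  have h_mem {r : ℝ} (hr : 0 ≤ r) : ‖x‖ ^ 2 + r ∈ Ioi 0 := add_pos_of_pos_of_nonneg hx hr
  rw [fundSol_eq_fundSolProfile, max_comm, max_comm]
  exact abs_le_max_abs_abs
    (monotoneOn_fundSolProfile hx (h_mem ht.1) (le_add_of_nonneg_right ht.1))
    (monotoneOn_fundSolProfile (h_mem ht.1) (h_mem zero_le_one) (by gcongr; exact ht.2))

lemma tendsto_regularizedFundSol {x : EuclideanSpace ℝ (Fin d)} (hx : x ≠ 0) :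
    Tendsto (regularizedFundSol d · x) (𝓝 0) (𝓝 (fundSol d x)) := by
  have hx : 0 < ‖x‖ ^ 2 := by positivity
  rw [fundSol_eq_fundSolProfile]
  refine (contDiffAt_fundSolProfile (n := 0) hx).continuousAt.tendsto.comp ?_
  simpa using (continuous_const_add (‖x‖ ^ 2)).tendsto 0

lemma tendsto_integral_mul_regularizedFundSol [NeZero d] {g : EuclideanSpace ℝ (Fin d) → ℝ}
    (hg : Continuous g) (hcg : HasCompactSupport g) :
    Tendsto (fun t ↦ ∫ x, g x * regularizedFundSol d t x) (𝓝[>] 0)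
      (𝓝 (∫ x, g x * fundSol d x)) := by
  have h_cont {t : ℝ} (ht : 0 < t) : Continuous (regularizedFundSol d t) :=
    (contDiff_regularizedFundSol (n := 0) ht).continuous
  refine tendsto_integral_filter_of_dominated_convergence
    (fun x ↦ |g x * fundSol d x| + |g x * regularizedFundSol d 1 x|) ?_ ?_ ?_ ?_
  · filter_upwards [self_mem_nhdsWithin] with t ht
    exact (hg.mul (h_cont ht)).aestronglyMeasurable
  · filter_upwards [Ioc_mem_nhdsGT zero_lt_one] with t ht
    filter_upwards [Measure.ae_ne volume 0] with x hx
    rw [Real.norm_eq_abs, abs_mul, abs_mul, abs_mul, ← mul_add]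
    gcongr
    exact (abs_regularizedFundSol_le (Ioc_subset_Icc_self ht) hx).trans
      (max_le_add_of_nonneg (abs_nonneg _) (abs_nonneg _))
  · exact (locallyIntegrable_fundSol.integrable_smul_left_of_hasCompactSupport hg hcg).abs.add
      ((hg.mul (h_cont one_pos)).integrable_of_hasCompactSupport hcg.mul_right).abs
  · filter_upwards [Measure.ae_ne volume 0] with x hx
    exact ((tendsto_regularizedFundSol hx).mono_left nhdsWithin_le_nhds).const_mul _

lemma tendsto_pow_mul_sq_add_one_rpow_neg_half (n : ℕ) :
    Tendsto (fun r : ℝ ↦ r ^ n * (r ^ 2 + 1) ^ (-n / 2 : ℝ)) atTop (𝓝 1) := by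
  have h_inv : Tendsto (fun r : ℝ ↦ 1 + (r ^ 2)⁻¹) atTop (𝓝 1) := by
    simpa using (tendsto_inv_atTop_zero.comp (tendsto_pow_atTop two_ne_zero)).const_add (1 : ℝ)
  have h_rpow := h_inv.rpow_const (p := -n / 2) (.inl one_ne_zero)
  rw [Real.one_rpow] at h_rpow
  refine h_rpow.congr' ?_
  filter_upwards [eventually_gt_atTop 0] with r hr
  have h_factor : r ^ 2 + 1 = r ^ 2 * (1 + (r ^ 2)⁻¹) := by field_simp
  rw [h_factor, Real.mul_rpow (by positivity) (by positivity), ← mul_assoc,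
    pow_mul_sq_rpow_neg_half hr, one_mul]

lemma hasDerivAt_pow_mul_sq_add_one_rpow_neg_half {n : ℕ} (hn : n ≠ 0) (r : ℝ) :
    HasDerivAt (fun r : ℝ ↦ r ^ n * (r ^ 2 + 1) ^ (-n / 2 : ℝ))
      (n * (r ^ (n - 1) * (r ^ 2 + 1) ^ (-n / 2 - 1 : ℝ))) r := by
  have h_pos : 0 < r ^ 2 + 1 := by positivity
  refine ((hasDerivAt_pow n r).mul (((hasDerivAt_pow 2 r).add_const 1).rpow_const
    (p := -n / 2) (.inl h_pos.ne'))).congr_deriv ?_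
  have h_rpow : (r ^ 2 + 1) ^ (-n / 2 : ℝ) = (r ^ 2 + 1) ^ (-n / 2 - 1 : ℝ) * (r ^ 2 + 1) := by
    rw [Real.rpow_sub_one h_pos.ne', div_mul_cancel₀ _ h_pos.ne']
  rw [h_rpow, ← pow_sub_one_mul hn r]
  push_cast
  ring

lemma integral_Ioi_pow_mul_sq_add_one_rpow {n : ℕ} (hn : n ≠ 0) :
    ∫ r in Ioi (0 : ℝ), r ^ (n - 1) * (r ^ 2 + 1) ^ (-n / 2 - 1 : ℝ) = (n : ℝ)⁻¹ := by
  have h_ftc : ∫ r in Ioi (0 : ℝ), n * (r ^ (n - 1) * (r ^ 2 + 1) ^ (-n / 2 - 1 : ℝ)) = 1 - 0 := by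
    refine (integral_Ioi_of_hasDerivAt_of_nonneg
      (hasDerivAt_pow_mul_sq_add_one_rpow_neg_half hn 0).continuousAt.continuousWithinAt
      (fun r _ ↦ hasDerivAt_pow_mul_sq_add_one_rpow_neg_half hn r) (fun r (hr : 0 < r) ↦ ?_)
      (tendsto_pow_mul_sq_add_one_rpow_neg_half n)).trans ?_
    · positivity
    · simp [hn]
  rw [integral_const_mul, sub_zero] at h_ftc
  exact eq_inv_of_mul_eq_one_right h_ftc

lemma regularizedDelta_nonneg {t : ℝ} (ht : 0 ≤ t) (x : EuclideanSpace ℝ (Fin d)) :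
    0 ≤ regularizedDelta d t x := by
  have := unitBallVolume_pos d
  unfold regularizedDelta
  positivity

lemma integral_regularizedDelta_one [NeZero d] :
    ∫ x : EuclideanSpace ℝ (Fin d), regularizedDelta d 1 x = 1 := by
  have hd : (d : ℝ) ≠ 0 := NeZero.ne _
  have hV := (unitBallVolume_pos d).ne'
  simp only [regularizedDelta, one_mul]
  rw [integral_const_mul,
    integral_fun_norm_addHaar volume fun r ↦ (r ^ 2 + 1) ^ (-d / 2 - 1 : ℝ)]
  simp only [finrank_euclideanSpace_fin, smul_eq_mul, nsmul_eq_mul,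
    integral_Ioi_pow_mul_sq_add_one_rpow (NeZero.ne d)]
  change (unitBallVolume d)⁻¹ * (d * (unitBallVolume d * (d : ℝ)⁻¹)) = 1
  field_simp

lemma tendsto_norm_pow_mul_regularizedDelta_one :
    Tendsto (fun x : EuclideanSpace ℝ (Fin d) ↦ ‖x‖ ^ d * regularizedDelta d 1 x)
      (Bornology.cobounded _) (𝓝 0) := by
  have h_inv : Tendsto (fun r : ℝ ↦ (r ^ 2 + 1)⁻¹) atTop (𝓝 0) :=
    tendsto_inv_atTop_zero.comp
      (tendsto_atTop_add_const_right _ 1 (tendsto_pow_atTop two_ne_zero))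
  have h_radial := (((tendsto_pow_mul_sq_add_one_rpow_neg_half d).mul h_inv).const_mul
    (unitBallVolume d)⁻¹).comp (tendsto_norm_cobounded_atTop (E := EuclideanSpace ℝ (Fin d)))
  rw [mul_zero, mul_zero] at h_radial
  refine h_radial.congr fun x ↦ ?_
  have h_pos : ‖x‖ ^ 2 + 1 ≠ 0 := by positivity
  simp only [Function.comp_apply, regularizedDelta, Real.rpow_sub_one h_pos]
  ring

lemma pow_mul_regularizedDelta_one_smul {t : ℝ} (ht : 0 < t) (x : EuclideanSpace ℝ (Fin d)) :
    (√t)⁻¹ ^ d * regularizedDelta d 1 ((√t)⁻¹ • x) = regularizedDelta d t x := by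
  have h_sq : ‖(√t)⁻¹ • x‖ ^ 2 + 1 = (√t)⁻¹ ^ 2 * (‖x‖ ^ 2 + t) := by
    rw [norm_smul, mul_pow, Real.norm_of_nonneg (by positivity), inv_pow, Real.sq_sqrt ht.le]
    field_simp
  have h_inv : ((√t)⁻¹ ^ 2)⁻¹ = t := by rw [inv_pow, inv_inv, Real.sq_sqrt ht.le]
  have h_cancel := pow_mul_sq_rpow_neg_half (inv_pos.2 (Real.sqrt_pos.2 ht)) d
  rw [regularizedDelta, regularizedDelta, h_sq, Real.mul_rpow (by positivity) (by positivity),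
    Real.rpow_sub_one (by positivity) (_ : ℝ), div_eq_mul_inv, h_inv]
  linear_combination (unitBallVolume d)⁻¹ * t * (‖x‖ ^ 2 + t) ^ (-d / 2 - 1 : ℝ) * h_cancel

lemma tendsto_integral_regularizedDelta_mul [NeZero d] {ψ : EuclideanSpace ℝ (Fin d) → ℝ}
    (hψ : Integrable ψ) (hψ0 : ContinuousAt ψ 0) :
    Tendsto (fun t ↦ ∫ x, regularizedDelta d t x * ψ x) (𝓝[>] 0) (𝓝 (ψ 0)) := by
  have h_scale : Tendsto (fun t ↦ (√t)⁻¹) (𝓝[>] 0) atTop := by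
    refine tendsto_inv_nhdsGT_zero.comp (tendsto_nhdsWithin_iff.2 ⟨?_, ?_⟩)
    · simpa using (Real.continuous_sqrt.tendsto 0).mono_left nhdsWithin_le_nhds
    · filter_upwards [self_mem_nhdsWithin] with t ht using Real.sqrt_pos.2 ht
  refine ((tendsto_integral_comp_smul_smul_of_integrable (regularizedDelta_nonneg zero_le_one)
    integral_regularizedDelta_one ?_ hψ hψ0).comp h_scale).congr' ?_
  · simpa only [finrank_euclideanSpace_fin] using tendsto_norm_pow_mul_regularizedDelta_one
  · filter_upwards [self_mem_nhdsWithin] with t ht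
    simp only [Function.comp_apply, finrank_euclideanSpace_fin, smul_eq_mul,
      pow_mul_regularizedDelta_one_smul ht]

lemma integral_lap_mul_fundSol [NeZero d] {ψ : EuclideanSpace ℝ (Fin d) → ℝ}
    (hψ : ContDiff ℝ 2 ψ) (hcψ : HasCompactSupport ψ) : ∫ x, lap ψ x * fundSol d x = ψ 0 := by
  refine tendsto_nhds_unique
    (tendsto_integral_mul_regularizedFundSol (continuous_lap hψ) (hasCompactSupport_lap hcψ))
    ((tendsto_integral_regularizedDelta_mul (hψ.continuous.integrable_of_hasCompactSupport hcψ)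
      hψ.continuous.continuousAt).congr' ?_)
  filter_upwards [self_mem_nhdsWithin] with t ht
  simp only [← lap_regularizedFundSol ht, mul_comm (lap ψ _),
    integral_mul_lap_eq_integral_lap_mul (contDiff_regularizedFundSol ht) hψ hcψ]

lemma integral_lap_mul_fundSol_sub [NeZero d] {φ : EuclideanSpace ℝ (Fin d) → ℝ}
    (hφ : ContDiff ℝ 2 φ) (hcφ : HasCompactSupport φ) (η : EuclideanSpace ℝ (Fin d)) :
    ∫ ξ, lap φ ξ * fundSol d (ξ - η) = φ η := by
  have h := integral_lap_mul_fundSol (ψ := fun x ↦ φ (x + η))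
    (hφ.comp (contDiff_id.add contDiff_const)) (hcφ.comp_homeomorph (.addRight η))
  simp only [lap_comp_add_right, zero_add] at h
  rw [← h, ← integral_add_right_eq_self _ η]
  simp only [add_sub_cancel_right]

end FundamentalSolution

theorem newtonian_potential_basic_general {d : ℕ} [NeZero d]
    {X : Type*} [NormedAddCommGroup X] [NormedSpace ℝ X] [CompleteSpace X]
    {f : EuclideanSpace ℝ (Fin d) → X} (hf : Integrable f) (hsupp : HasCompactSupport f) :
    (∀ᵐ ξ : EuclideanSpace ℝ (Fin d), Integrable fun η ↦ fundSol d (ξ - η) • f η) ∧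
    LocallyIntegrable (fun ξ ↦ ∫ η, fundSol d (ξ - η) • f η) ∧
    ∀ φ : EuclideanSpace ℝ (Fin d) → ℝ, ContDiff ℝ 2 φ → HasCompactSupport φ →
      ∫ ξ, lap φ ξ • (∫ η, fundSol d (ξ - η) • f η) = ∫ ξ, φ ξ • f ξ := by
  set L : X →L[ℝ] ℝ →L[ℝ] X := (ContinuousLinearMap.lsmul ℝ ℝ).flip
  have hΦ : LocallyIntegrable (fundSol d) := locallyIntegrable_fundSol
  refine ⟨ae_convolutionExistsAt_of_hasCompactSupport L hf hsupp hΦ,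
    locallyIntegrable_convolution_of_hasCompactSupport L hf hsupp hΦ, fun φ hφ hcφ ↦ ?_⟩
  calc ∫ ξ, lap φ ξ • (f ⋆[L, volume] fundSol d) ξ
    _ = ∫ η, (∫ ξ, lap φ ξ • fundSol d (ξ - η)) • f η :=
      integral_smul_convolution_of_hasCompactSupport L hf hsupp hΦ (continuous_lap hφ)
        (hasCompactSupport_lap hcφ)
    _ = ∫ η, φ η • f η := by simp only [smul_eq_mul, integral_lap_mul_fundSol_sub hφ hcφ]

/-- For `f ∈ L¹(ℝ^d, X)` with compact support, the Newtonian
potential `Φ ∗ f` is defined a.e., is locally integrable, and satisfies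
`Δ(Φ ∗ f) = f` in the sense of distributions. -/
theorem newtonian_potential_basic {d : ℕ} (hd : 2 ≤ d)
    {X : Type*} [NormedAddCommGroup X] [NormedSpace ℝ X] [CompleteSpace X]
    (f : EuclideanSpace ℝ (Fin d) → X) (hf : Integrable f)
    (hsupp : HasCompactSupport f) :
    (∀ᵐ ξ : EuclideanSpace ℝ (Fin d),
      Integrable (fun η => fundSol d (ξ - η) • f η)) ∧
    LocallyIntegrable (fun ξ => ∫ η, fundSol d (ξ - η) • f η) ∧
    ∀ φ : EuclideanSpace ℝ (Fin d) → ℝ, ContDiff ℝ (⊤ : ℕ∞) φ → HasCompactSupport φ →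
      ∫ ξ, (lap φ ξ) • (∫ η, fundSol d (ξ - η) • f η) = ∫ ξ, φ ξ • f ξ := by
  have : NeZero d := ⟨by lia⟩
  obtain ⟨hae, hloc, hdist⟩ := newtonian_potential_basic_general hf hsupp
  exact ⟨hae, hloc, fun φ hφ ↦ hdist φ (mod_cast contDiff_infty.1 hφ 2)⟩
end
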